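/- arXiv:math/0608591 — 4 statements merged into one kernel-verified Lean document; each statement's English description precedes it below -/
import Mathlib

section
/- Suppose 𝒜 = 𝒜₁ ⊎ 𝒜₂ with 𝒜₁ and 𝒜₂ nonempty, and let m be a positive integer. Then the map α : Ch(𝒜₁)^m × Ch(𝒜₂)^m → Ch(𝒜₁ ⊎ 𝒜₂)^m given by α(C₁,…,C_m, D₁,…,D_m) = (C₁ ∩ D₁, …, C_m ∩ D_m), for C_i ∈ Ch(𝒜₁) and D_i ∈ Ch(𝒜₂), is bijective. -/
/-!
A connected subset of the complement of some hyperplanes `{f = a}` lies on one side of each of them,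
so the segment joining two of its points never leaves the complement. Hence chambers are convex,
and an intersection `C ∩ D` of a chamber of `𝒜₁` with a chamber of `𝒜₂` is connected as soon as it
is nonempty; it is then the component, in the complement of `𝒜₁ ∪ 𝒜₂`, of each of its points.
Bijectivity follows, because a component is determined by any point in it.

That `C ∩ D` is nonempty is where additivity of the rank enters. Let `K₁`, `K₂` be the
intersections of the hyperplanes of `𝒜₁`, `𝒜₂`. By a dimension count `K₁ + K₂` is the whole space,
while `C` is stable under translation by `K₁` and `D` under translation by `K₂`: if `x ∈ C`, `y ∈ D`
and `y - x = u + v` with `u ∈ K₁` and `v ∈ K₂`, then `x + u = y - v` lies in both.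
-/

noncomputable section
attribute [local instance] Classical.propDecidable

/-- A (nonempty if `ι` is nonempty) real central arrangement of hyperplanes in `ℝ^ℓ`,
given by a family of nonzero defining linear forms with pairwise distinct kernels
(the hyperplanes `H j = ker (form j)`). -/
structure Arrangement (ℓ : ℕ) (ι : Type) [Fintype ι] where
  form : ι → ((Fin ℓ → ℝ) →ₗ[ℝ] ℝ)
  form_ne_zero : ∀ j, form j ≠ 0
  ker_injective : ∀ j k, LinearMap.ker (form j) = LinearMap.ker (form k) → j = k

namespace Arrangement

variable {ℓ : ℕ} {ι : Type} [Fintype ι]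

/-- The complement `ℝ^ℓ ∖ (H₁ ∪ ⋯ ∪ Hₙ)`. -/
def Complement (A : Arrangement ℓ ι) : Set (Fin ℓ → ℝ) :=
  {x | ∀ j, A.form j x ≠ 0}

/-- A chamber is a connected component of the complement. -/
def IsChamber (A : Arrangement ℓ ι) (C : Set (Fin ℓ → ℝ)) : Prop :=
  ∃ x ∈ A.Complement, C = connectedComponentIn A.Complement x

/-- The set (type) of chambers of the arrangement. -/
abbrev Ch (A : Arrangement ℓ ι) : Type := {C : Set (Fin ℓ → ℝ) // A.IsChamber C}

/-- `εⱼ^σ(C) = στ` when `C ⊆ Hⱼ^τ`; `B = {+,-}` is realized as `ℤˣ`, `+ = 1`, `- = -1`. -/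
def eps (A : Arrangement ℓ ι) (j : ι) (σ : ℤˣ) (C : A.Ch) : ℤˣ :=
  σ * (if ∀ x ∈ C.1, 0 < A.form j x then 1 else -1)

/-- `Φ : Ch^m → Ch` is admissible if there is a family `φⱼ^σ : B^m → B` with
`φⱼ^σ(+,…,+) = +` and `εⱼ^σ ∘ Φ = φⱼ^σ ∘ εⱼ^σ` (componentwise) for all `j, σ`. -/
def IsAdmissible (A : Arrangement ℓ ι) (m : ℕ) (Φ : (Fin m → A.Ch) → A.Ch) : Prop :=
  ∃ φ : ι → ℤˣ → ((Fin m → ℤˣ) → ℤˣ),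
    (∀ j σ, φ j σ (fun _ => 1) = 1) ∧
    ∀ j σ 𝒞, A.eps j σ (Φ 𝒞) = φ j σ (fun i => A.eps j σ (𝒞 i))

/-- `r(ℬ) = codim (⋂_{H ∈ ℬ} H)` for the subarrangement indexed by `S`. -/
def rnkOn (A : Arrangement ℓ ι) (S : Finset ι) : ℕ :=
  ℓ - Module.finrank ℝ ↥(⨅ j ∈ S, LinearMap.ker (A.form j))

/-- `r(𝒜)`. -/
def rnk (A : Arrangement ℓ ι) : ℕ := A.rnkOn Finset.univ

/-- The subarrangement indexed by `S` decomposes as a disjoint union of two nonempty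
subarrangements with additive rank. -/
def DecomposableOn (A : Arrangement ℓ ι) (S : Finset ι) : Prop :=
  ∃ S₁ S₂ : Finset ι, S₁.Nonempty ∧ S₂.Nonempty ∧ Disjoint S₁ S₂ ∧ S₁ ∪ S₂ = S ∧
    A.rnkOn S = A.rnkOn S₁ + A.rnkOn S₂

def IndecomposableOn (A : Arrangement ℓ ι) (S : Finset ι) : Prop := ¬ A.DecomposableOn S

def Decomposable (A : Arrangement ℓ ι) : Prop := A.DecomposableOn Finset.univ

def Indecomposable (A : Arrangement ℓ ι) : Prop := ¬ A.Decomposable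

/-- The subarrangement of `A` consisting of the hyperplanes indexed by `S`. -/
def restrict (A : Arrangement ℓ ι) (S : Finset ι) : Arrangement ℓ {j : ι // j ∈ S} where
  form := fun j => A.form j.1
  form_ne_zero := fun j => A.form_ne_zero j.1
  ker_injective := fun j k h => Subtype.ext (A.ker_injective j.1 k.1 h)

/-- A dependent subarrangement: `r(ℬ) < |ℬ|`. -/
def DependentOn (A : Arrangement ℓ ι) (S : Finset ι) : Prop := A.rnkOn S < S.card

/-- A circuit: a minimally dependent subarrangement. -/
def IsCircuitOn (A : Arrangement ℓ ι) (S : Finset ι) : Prop :=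
  A.DependentOn S ∧ ∀ T ⊂ S, ¬ A.DependentOn T

end Arrangement

section Components

variable {X : Type*} [TopologicalSpace X] {U V C D : Set X} {x : X}

/-- The connected components of a subset `U` of a topological space, as subsets of the ambient
space. When `U` is the complement of a hyperplane arrangement, these are its chambers. -/
def componentsIn (U : Set X) : Set (Set X) :=
  {C | ∃ x ∈ U, C = connectedComponentIn U x}

theorem connectedComponentIn_mem_componentsIn (hx : x ∈ U) :
    connectedComponentIn U x ∈ componentsIn U :=
  ⟨x, hx, rfl⟩

theorem nonempty_of_mem_componentsIn (hC : C ∈ componentsIn U) : C.Nonempty := by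
  obtain ⟨x, hx, rfl⟩ := hC
  exact ⟨x, mem_connectedComponentIn hx⟩

theorem subset_of_mem_componentsIn (hC : C ∈ componentsIn U) : C ⊆ U := by
  obtain ⟨x, -, rfl⟩ := hC
  exact connectedComponentIn_subset U x

theorem isPreconnected_of_mem_componentsIn (hC : C ∈ componentsIn U) : IsPreconnected C := by
  obtain ⟨x, -, rfl⟩ := hC
  exact isPreconnected_connectedComponentIn

theorem eq_connectedComponentIn_of_mem_componentsIn (hC : C ∈ componentsIn U) (hx : x ∈ C) :
    C = connectedComponentIn U x := by
  obtain ⟨y, -, rfl⟩ := hC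
  exact connectedComponentIn_eq hx

theorem connectedComponentIn_inter_subset (U V : Set X) (x : X) :
    connectedComponentIn (U ∩ V) x ⊆ connectedComponentIn U x ∩ connectedComponentIn V x :=
  Set.subset_inter (connectedComponentIn_mono x Set.inter_subset_left)
    (connectedComponentIn_mono x Set.inter_subset_right)

theorem inter_eq_connectedComponentIn_inter (hC : C ∈ componentsIn U) (hD : D ∈ componentsIn V)
    (hCD : IsPreconnected (C ∩ D)) (hx : x ∈ C ∩ D) :
    C ∩ D = connectedComponentIn (U ∩ V) x := by
  apply Set.Subset.antisymm
  · exact hCD.subset_connectedComponentIn hx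
      (Set.inter_subset_inter (subset_of_mem_componentsIn hC) (subset_of_mem_componentsIn hD))
  · rw [eq_connectedComponentIn_of_mem_componentsIn hC hx.1,
      eq_connectedComponentIn_of_mem_componentsIn hD hx.2]
    exact connectedComponentIn_inter_subset U V x

theorem bijOn_inter_componentsIn
    (h : ∀ C ∈ componentsIn U, ∀ D ∈ componentsIn V, IsConnected (C ∩ D)) :
    Set.BijOn (fun p : Set X × Set X => p.1 ∩ p.2) (componentsIn U ×ˢ componentsIn V)
      (componentsIn (U ∩ V)) := by
  refine ⟨?mapsTo, ?injOn, ?surjOn⟩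
  case mapsTo =>
    rintro ⟨C, D⟩ ⟨hC, hD⟩
    obtain ⟨⟨x, hx⟩, hCD⟩ := h C hC D hD
    exact ⟨x, ⟨subset_of_mem_componentsIn hC hx.1, subset_of_mem_componentsIn hD hx.2⟩,
      inter_eq_connectedComponentIn_inter hC hD hCD hx⟩
  case injOn =>
    rintro ⟨C, D⟩ ⟨hC, hD⟩ ⟨C', D'⟩ ⟨hC', hD'⟩ (heq : C ∩ D = C' ∩ D')
    obtain ⟨x, hx⟩ := (h C hC D hD).nonempty
    have hx' : x ∈ C' ∩ D' := heq ▸ hx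
    exact Prod.ext
      ((eq_connectedComponentIn_of_mem_componentsIn hC hx.1).trans
        (eq_connectedComponentIn_of_mem_componentsIn hC' hx'.1).symm)
      ((eq_connectedComponentIn_of_mem_componentsIn hD hx.2).trans
        (eq_connectedComponentIn_of_mem_componentsIn hD' hx'.2).symm)
  case surjOn =>
    rintro _ ⟨x, hx, rfl⟩
    have hC := connectedComponentIn_mem_componentsIn hx.1
    have hD := connectedComponentIn_mem_componentsIn hx.2
    exact ⟨(_, _), ⟨hC, hD⟩, inter_eq_connectedComponentIn_inter hC hD (h _ hC _ hD).isPreconnected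
      ⟨mem_connectedComponentIn hx.1, mem_connectedComponentIn hx.2⟩⟩

end Components

section HyperplaneComplement

variable {E ι κ : Type*} [AddCommGroup E] [Module ℝ E] [TopologicalSpace E]
  {f : ι → E →L[ℝ] ℝ} {a : ι → ℝ} {g : κ → E →L[ℝ] ℝ} {b : κ → ℝ} {s C D : Set E} {x y v : E}

/-- The complement of the affine hyperplane arrangement with hyperplanes `{x | f i x = a i}`;
central arrangements are the case `a = 0`. -/
def hyperplaneComplement (f : ι → E →L[ℝ] ℝ) (a : ι → ℝ) : Set E :=
  {x | ∀ i, f i x ≠ a i}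

theorem segment_subset_hyperplaneComplement (hs : IsPreconnected s)
    (hsub : s ⊆ hyperplaneComplement f a) (hx : x ∈ s) (hy : y ∈ s) :
    segment ℝ x y ⊆ hyperplaneComplement f a := by
  intro z hz i
  have himage : (f i '' s).OrdConnected :=
    (hs.image (f i) (f i).continuous.continuousOn).ordConnected
  have hfz : f i z ∈ Set.uIcc (f i x) (f i y) := by
    rw [← segment_eq_uIcc]
    exact image_segment ℝ (f i).toLinearMap.toAffineMap x y ▸ Set.mem_image_of_mem (f i) hz
  obtain ⟨w, hw, hwz⟩ :=
    himage.uIcc_subset (Set.mem_image_of_mem _ hx) (Set.mem_image_of_mem _ hy) hfz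
  exact hwz ▸ hsub hw i

theorem add_mem_hyperplaneComplement (hx : x ∈ hyperplaneComplement f a)
    (hv : v ∈ ⨅ i, (f i).ker) : x + v ∈ hyperplaneComplement f a := by
  intro i
  have hfv : f i v = 0 := (Submodule.mem_iInf _).1 hv i
  rw [map_add, hfv, add_zero]
  exact hx i

variable [ContinuousAdd E] [ContinuousSMul ℝ E]

theorem convex_of_mem_componentsIn_hyperplaneComplement
    (hC : C ∈ componentsIn (hyperplaneComplement f a)) : Convex ℝ C := by
  refine convex_iff_segment_subset.2 fun x hx y hy => ?_
  rw [eq_connectedComponentIn_of_mem_componentsIn hC hx]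
  exact (convex_segment x y).isPreconnected.subset_connectedComponentIn (left_mem_segment ℝ x y)
    (segment_subset_hyperplaneComplement (isPreconnected_of_mem_componentsIn hC)
      (subset_of_mem_componentsIn hC) hx hy)

theorem add_mem_of_mem_componentsIn_hyperplaneComplement
    (hC : C ∈ componentsIn (hyperplaneComplement f a)) (hx : x ∈ C) (hv : v ∈ ⨅ i, (f i).ker) :
    x + v ∈ C := by
  let K : Submodule ℝ E := ⨅ i, (f i).ker
  have hpre : IsPreconnected ((x + ·) '' (K : Set E)) :=
    (K.convex.translate x).isPreconnected
  have hsub : (x + ·) '' (K : Set E) ⊆ hyperplaneComplement f a := by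
    rintro _ ⟨u, hu, rfl⟩
    exact add_mem_hyperplaneComplement (subset_of_mem_componentsIn hC hx) hu
  rw [eq_connectedComponentIn_of_mem_componentsIn hC hx]
  exact hpre.subset_connectedComponentIn ⟨0, K.zero_mem, add_zero x⟩ hsub ⟨v, hv, rfl⟩

theorem inter_nonempty_of_mem_componentsIn_hyperplaneComplement
    (htop : (⨅ i, (f i).ker) ⊔ (⨅ j, (g j).ker) = ⊤)
    (hC : C ∈ componentsIn (hyperplaneComplement f a))
    (hD : D ∈ componentsIn (hyperplaneComplement g b)) : (C ∩ D).Nonempty := by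
  obtain ⟨x, hx⟩ := nonempty_of_mem_componentsIn hC
  obtain ⟨y, hy⟩ := nonempty_of_mem_componentsIn hD
  obtain ⟨u, hu, v, hv, huv⟩ := Submodule.mem_sup.1 (htop ▸ Submodule.mem_top : y - x ∈ _)
  have hxy : y + -v = x + u := by
    rw [← sub_eq_add_neg, sub_eq_iff_eq_add, add_assoc, huv, add_sub_cancel]
  exact ⟨x + u, add_mem_of_mem_componentsIn_hyperplaneComplement hC hx hu,
    hxy ▸ add_mem_of_mem_componentsIn_hyperplaneComplement hD hy (neg_mem hv)⟩

theorem bijOn_inter_componentsIn_hyperplaneComplement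
    (htop : (⨅ i, (f i).ker) ⊔ (⨅ j, (g j).ker) = ⊤) :
    Set.BijOn (fun p : Set E × Set E => p.1 ∩ p.2)
      (componentsIn (hyperplaneComplement f a) ×ˢ componentsIn (hyperplaneComplement g b))
      (componentsIn (hyperplaneComplement f a ∩ hyperplaneComplement g b)) :=
  bijOn_inter_componentsIn fun _ hC _ hD =>
    ⟨inter_nonempty_of_mem_componentsIn_hyperplaneComplement htop hC hD,
      ((convex_of_mem_componentsIn_hyperplaneComplement hC).inter
        (convex_of_mem_componentsIn_hyperplaneComplement hD)).isPreconnected⟩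

end HyperplaneComplement

theorem sup_eq_top_of_finrank_sub_finrank_inf_eq {K V : Type*} [DivisionRing K] [AddCommGroup V]
    [Module K V] [FiniteDimensional K V] {P Q : Submodule K V}
    (h : Module.finrank K V - Module.finrank K ↥(P ⊓ Q) =
      (Module.finrank K V - Module.finrank K P) + (Module.finrank K V - Module.finrank K Q)) :
    P ⊔ Q = ⊤ := by
  apply Submodule.eq_top_of_finrank_eq
  have hdim := Submodule.finrank_sup_add_finrank_inf_eq P Q
  have hP := P.finrank_le
  have hQ := Q.finrank_le
  have hinf := (P ⊓ Q).finrank_le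
  omega

namespace Arrangement

variable {ℓ : ℕ} {ι : Type} [Fintype ι]

theorem complement_restrict_inter_complement_restrict_compl (A : Arrangement ℓ ι) (S : Finset ι) :
    (A.restrict S).Complement ∩ (A.restrict Sᶜ).Complement = A.Complement := by
  ext x
  refine ⟨fun ⟨hS, hSc⟩ j => ?_, fun hx => ⟨fun j => hx j, fun j => hx j⟩⟩
  by_cases hj : j ∈ S
  · exact hS ⟨j, hj⟩
  · exact hSc ⟨j, Finset.mem_compl.2 hj⟩

theorem iInf_ker_form_sup_iInf_ker_form_compl_eq_top {A : Arrangement ℓ ι} {S : Finset ι}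
    (hr : A.rnk = A.rnkOn S + A.rnkOn Sᶜ) :
    (⨅ j, ((A.restrict S).form j).ker) ⊔ (⨅ j, ((A.restrict Sᶜ).form j).ker) = ⊤ := by
  have hrestrict (T : Finset ι) :
      (⨅ j, ((A.restrict T).form j).ker) = ⨅ j ∈ T, (A.form j).ker :=
    iInf_subtype
  have hinf : (⨅ j ∈ (Finset.univ : Finset ι), (A.form j).ker) =
      (⨅ j ∈ S, (A.form j).ker) ⊓ ⨅ j ∈ Sᶜ, (A.form j).ker := by
    rw [← Finset.union_compl S, Finset.iInf_union]
  rw [hrestrict, hrestrict]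
  apply sup_eq_top_of_finrank_sub_finrank_inf_eq
  rw [← hinf, Module.finrank_fin_fun]
  exact hr

end Arrangement

theorem chambers_product_bijection_general {E ι κ m : Type*} [AddCommGroup E] [Module ℝ E]
    [TopologicalSpace E] [ContinuousAdd E] [ContinuousSMul ℝ E]
    (f : ι → E →L[ℝ] ℝ) (a : ι → ℝ) (g : κ → E →L[ℝ] ℝ) (b : κ → ℝ)
    (htop : (⨅ i, (f i).ker) ⊔ (⨅ j, (g j).ker) = ⊤) :
    ∃ e : ((m → componentsIn (hyperplaneComplement f a)) ×
          (m → componentsIn (hyperplaneComplement g b))) ≃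
        (m → componentsIn (hyperplaneComplement f a ∩ hyperplaneComplement g b)),
      ∀ CD i, (e CD i).1 = (CD.1 i).1 ∩ (CD.2 i).1 :=
  ⟨(Equiv.arrowProdEquivProdArrow m _ _).symm.trans <| Equiv.piCongrRight fun _ =>
      (Equiv.Set.prod _ _).symm.trans (bijOn_inter_componentsIn_hyperplaneComplement htop).equiv,
    fun _ _ => rfl⟩

/-- **Lemma.** If `𝒜 = 𝒜₁ ⊎ 𝒜₂` with `𝒜₁, 𝒜₂` nonempty, then the map
`Ch(𝒜₁)^m × Ch(𝒜₂)^m → Ch(𝒜₁ ⊎ 𝒜₂)^m`, `(C₁,…,C_m,D₁,…,D_m) ↦ (C₁ ∩ D₁,…,C_m ∩ D_m)`,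
is bijective (recorded as: there is an equivalence whose value is componentwise
intersection of chambers). -/
theorem chambers_product_bijection {ℓ : ℕ} {ι : Type} [Fintype ι] (A : Arrangement ℓ ι)
    (S : Finset ι) (hS : S.Nonempty) (hSc : Sᶜ.Nonempty)
    (hr : A.rnk = A.rnkOn S + A.rnkOn Sᶜ)
    (m : ℕ) (hm : 0 < m) :
    ∃ e : ((Fin m → (A.restrict S).Ch) × (Fin m → (A.restrict Sᶜ).Ch)) ≃ (Fin m → A.Ch),
      ∀ (CD : (Fin m → (A.restrict S).Ch) × (Fin m → (A.restrict Sᶜ).Ch)) (i : Fin m),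
        ((e CD) i).1 = (CD.1 i).1 ∩ (CD.2 i).1 := by
  unfold Arrangement.Ch Arrangement.IsChamber
  rw [← A.complement_restrict_inter_complement_restrict_compl S]
  exact chambers_product_bijection_general
    (fun j => ((A.restrict S).form j).toContinuousLinearMap) 0
    (fun j => ((A.restrict Sᶜ).form j).toContinuousLinearMap) 0
    (Arrangement.iInf_ker_form_sup_iInf_ker_form_compl_eq_top hr)
end
end

section
/- Suppose 𝒜 = 𝒜₁ ⊎ 𝒜₂ with 𝒜₁ and 𝒜₂ nonempty, and let m be a positive integer. Then there exists a natural bijection between AM(𝒜₁ ⊎ 𝒜₂, m) and AM(𝒜₁, m) × AM(𝒜₂, m); namely, identifying Ch(𝒜₁ ⊎ 𝒜₂)^m with Ch(𝒜₁)^m × Ch(𝒜₂)^m via intersection of chambers, every admissible map Φ for 𝒜₁ ⊎ 𝒜₂ equals Φ₁ × Φ₂ for a unique pair of admissible maps Φ₁ for 𝒜₁ and Φ₂ for 𝒜₂, and conversely every such product is admissible. -/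
/-!
The chamber through `x` is the open cone of the points `y` with `αⱼ(x) αⱼ(y) > 0` for all `j` (the
forms have constant sign on a connected set, and the cone is convex), so a chamber is determined by
its signs. If `π` sends each chamber of `𝒜` to the chamber of a subarrangement `ℬ` containing it,
then `π` preserves the signs at the hyperplanes of `ℬ`; hence for an admissible `Φ` the chamber
`π (Φ (E₁, …, Eₘ))` depends only on `π E₁, …, π Eₘ`. When `𝒜 = 𝒜₁ ⊎ 𝒜₂`, applying this to both
subarrangements splits `Φ` as a product, and the factors are unique because both sets of chambers
are nonempty. Since admissibility is a condition on each hyperplane separately, a product is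
admissible if and only if both factors are.
-/

noncomputable section
attribute [local instance] Classical.propDecidable

theorem pos_of_isPreconnected {X R : Type*} [TopologicalSpace X] [LinearOrder R] [Zero R]
    [TopologicalSpace R] [OrderClosedTopology R] {s : Set X} (hs : IsPreconnected s)
    {f : X → R} (hf : ContinuousOn f s) (hne : ∀ z ∈ s, f z ≠ 0)
    {x y : X} (hx : x ∈ s) (hy : y ∈ s) (hpos : 0 < f x) : 0 < f y := by
  by_contra hneg
  obtain ⟨z, hz, hz0⟩ := hs.intermediate_value hy hx hf ⟨not_lt.mp hneg, hpos.le⟩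
  exact hne z hz hz0

section ProdOp

variable {κ X Y Z : Type*}

/-- The product `Φ₁ × Φ₂` of two `κ`-ary operations, regarded as an operation on `Z` by means of an
identification `e` of `X × Y` with `Z`. -/
def prodOp (e : X × Y ≃ Z) (Φ₁ : (κ → X) → X) (Φ₂ : (κ → Y) → Y) : (κ → Z) → Z :=
  fun z => e (Φ₁ fun i => (e.symm (z i)).1, Φ₂ fun i => (e.symm (z i)).2)

theorem eq_prodOp_iff (e : X × Y ≃ Z) {Φ : (κ → Z) → Z} {Φ₁ : (κ → X) → X} {Φ₂ : (κ → Y) → Y} :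
    Φ = prodOp e Φ₁ Φ₂ ↔ ∀ x y, Φ (fun i => e (x i, y i)) = e (Φ₁ x, Φ₂ y) := by
  constructor
  · rintro rfl x y
    simp [prodOp]
  · intro h
    funext z
    simpa [prodOp] using h (fun i => (e.symm (z i)).1) fun i => (e.symm (z i)).2

theorem prodOp_injective2 [Nonempty X] [Nonempty Y] (e : X × Y ≃ Z) :
    Function.Injective2 (prodOp (κ := κ) e) := by
  intro Φ₁ Ψ₁ Φ₂ Ψ₂ h
  have heq (x : κ → X) (y : κ → Y) : (Φ₁ x, Φ₂ y) = (Ψ₁ x, Ψ₂ y) :=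
    e.injective (((eq_prodOp_iff e).mp rfl x y).symm.trans ((eq_prodOp_iff e).mp h x y))
  exact ⟨funext fun x => congrArg Prod.fst (heq x (Classical.arbitrary _)),
    funext fun y => congrArg Prod.snd (heq (Classical.arbitrary _) y)⟩

theorem exists_eq_prodOp_of_factorsThrough [Nonempty X] [Nonempty Y] (e : X × Y ≃ Z)
    {Φ : (κ → Z) → Z}
    (h₁ : (fun z => (e.symm (Φ z)).1).FactorsThrough fun z i => (e.symm (z i)).1)
    (h₂ : (fun z => (e.symm (Φ z)).2).FactorsThrough fun z i => (e.symm (z i)).2) :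
    ∃ Φ₁ Φ₂, Φ = prodOp e Φ₁ Φ₂ := by
  obtain ⟨Φ₁, hΦ₁⟩ := (Function.factorsThrough_iff _).mp h₁
  obtain ⟨Φ₂, hΦ₂⟩ := (Function.factorsThrough_iff _).mp h₂
  refine ⟨Φ₁, Φ₂, funext fun z => e.symm_apply_eq.mp ?_⟩
  exact Prod.ext (congrFun hΦ₁ z) (congrFun hΦ₂ z)

end ProdOp

namespace Arrangement

variable {ℓ : ℕ} {ι : Type} [Fintype ι] {A : Arrangement ℓ ι}

theorem connectedComponentIn_complement {x : Fin ℓ → ℝ} (hx : x ∈ A.Complement) :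
    connectedComponentIn A.Complement x = {y | ∀ j, 0 < A.form j x * A.form j y} := by
  apply Set.Subset.antisymm
  · intro y hy j
    have hcont : Continuous fun z => A.form j x * A.form j z :=
      continuous_const.mul (A.form j).continuous_of_finiteDimensional
    exact pos_of_isPreconnected isPreconnected_connectedComponentIn hcont.continuousOn
      (fun z hz => mul_ne_zero (hx j) ((connectedComponentIn_subset _ _ hz : z ∈ A.Complement) j))
      (mem_connectedComponentIn hx) hy (mul_self_pos.mpr (hx j))
  · have hconv : Convex ℝ {y | ∀ j, 0 < A.form j x * A.form j y} := by
      rw [Set.ofPred_forall]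
      exact convex_iInter fun j => convex_halfSpace_gt (A.form j x • A.form j).isLinear 0
    exact hconv.isPreconnected.subset_connectedComponentIn (fun j => mul_self_pos.mpr (hx j))
      fun y hy j => right_ne_zero_of_mul (hy j).ne'

instance instNonemptyCh : Nonempty A.Ch := by
  have hne (j : ι) : ∃ x, A.form j x ≠ 0 := DFunLike.ne_iff.mp (A.form_ne_zero j)
  obtain ⟨x, hx⟩ := Module.Dual.exists_forall_ne_zero_of_forall_exists A.form hne
  exact ⟨⟨_, x, hx, rfl⟩⟩

namespace Ch

theorem nonempty (C : A.Ch) : C.1.Nonempty := by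
  obtain ⟨_, x, hx, rfl⟩ := C
  exact ⟨x, mem_connectedComponentIn hx⟩

theorem subset_complement (C : A.Ch) : C.1 ⊆ A.Complement := by
  obtain ⟨_, x, -, rfl⟩ := C
  exact connectedComponentIn_subset _ _

theorem eq_connectedComponentIn (C : A.Ch) {x : Fin ℓ → ℝ} (hx : x ∈ C.1) :
    C.1 = connectedComponentIn A.Complement x := by
  obtain ⟨_, y, hy, rfl⟩ := C
  exact connectedComponentIn_eq hx

theorem mem_iff (C : A.Ch) {x y : Fin ℓ → ℝ} (hx : x ∈ C.1) :
    y ∈ C.1 ↔ ∀ j, 0 < A.form j x * A.form j y := by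
  rw [C.eq_connectedComponentIn hx, connectedComponentIn_complement (C.subset_complement hx),
    Set.mem_ofPred_eq]

theorem eq_of_mem {C D : A.Ch} {x : Fin ℓ → ℝ} (hC : x ∈ C.1) (hD : x ∈ D.1) : C = D :=
  Subtype.ext ((C.eq_connectedComponentIn hC).trans (D.eq_connectedComponentIn hD).symm)

end Ch

theorem eps_eq_of_mem (C : A.Ch) (j : ι) (σ : ℤˣ) {x : Fin ℓ → ℝ} (hx : x ∈ C.1) :
    A.eps j σ C = σ * if 0 < A.form j x then 1 else -1 := by
  have hpos : (∀ y ∈ C.1, 0 < A.form j y) ↔ 0 < A.form j x :=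
    ⟨fun h => h x hx, fun h y hy => (pos_iff_pos_of_mul_pos ((C.mem_iff hx).mp hy j)).mp h⟩
  simp only [eps, hpos]

theorem eps_eq_eps_iff {C D : A.Ch} {j : ι} {σ : ℤˣ} {x y : Fin ℓ → ℝ}
    (hx : x ∈ C.1) (hy : y ∈ D.1) :
    A.eps j σ C = A.eps j σ D ↔ 0 < A.form j x * A.form j y := by
  rw [eps_eq_of_mem C j σ hx, eps_eq_of_mem D j σ hy, mul_right_inj]
  rcases (C.subset_complement hx j).lt_or_gt with hxj | hxj <;>
    rcases (D.subset_complement hy j).lt_or_gt with hyj | hyj <;>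
    simp [hxj, hyj, hxj.not_gt, hyj.not_gt, mul_pos_iff]

theorem Ch.ext_eps (σ : ℤˣ) {C D : A.Ch} (h : ∀ j, A.eps j σ C = A.eps j σ D) : C = D := by
  obtain ⟨x, hx⟩ := C.nonempty
  obtain ⟨y, hy⟩ := D.nonempty
  have hyC : y ∈ C.1 := (C.mem_iff hx).mpr fun j => (eps_eq_eps_iff hx hy).mp (h j)
  exact Ch.eq_of_mem hyC hy

theorem eps_restrict_of_subset {T : Finset ι} {E : A.Ch} {C : (A.restrict T).Ch} (h : E.1 ⊆ C.1)
    (j : {j // j ∈ T}) (σ : ℤˣ) : (A.restrict T).eps j σ C = A.eps j σ E := by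
  obtain ⟨x, hx⟩ := E.nonempty
  rw [eps_eq_of_mem C j σ (h hx), eps_eq_of_mem E j σ hx]
  rfl

/-- Admissibility of `Φ` at the single hyperplane `Hⱼ` with sign `σ`: the sign `εⱼ^σ` of the value
of `Φ` is a function `φⱼ^σ` of the signs `εⱼ^σ` of its arguments, and `φⱼ^σ(+,…,+) = +`. -/
def IsAdmissibleAt (A : Arrangement ℓ ι) (j : ι) (σ : ℤˣ) {m : ℕ} (Φ : (Fin m → A.Ch) → A.Ch) :
    Prop :=
  ∃ φ : (Fin m → ℤˣ) → ℤˣ, φ (fun _ => 1) = 1 ∧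
    ∀ 𝒞, A.eps j σ (Φ 𝒞) = φ fun i => A.eps j σ (𝒞 i)

variable {m : ℕ}

theorem isAdmissible_iff_isAdmissibleAt {Φ : (Fin m → A.Ch) → A.Ch} :
    A.IsAdmissible m Φ ↔ ∀ j σ, A.IsAdmissibleAt j σ Φ := by
  simp only [IsAdmissible, IsAdmissibleAt, Classical.skolem, forall_and]

section Restrict

variable {T : Finset ι} {π : A.Ch → (A.restrict T).Ch} {Φ : (Fin m → A.Ch) → A.Ch}

theorem isAdmissibleAt_restrict_iff {Ψ : (Fin m → (A.restrict T).Ch) → (A.restrict T).Ch}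
    (hπ : ∀ E, E.1 ⊆ (π E).1) (hsurj : Function.Surjective π)
    (hΨ : ∀ ℰ, π (Φ ℰ) = Ψ fun i => π (ℰ i)) (j : {j // j ∈ T}) (σ : ℤˣ) :
    (A.restrict T).IsAdmissibleAt j σ Ψ ↔ A.IsAdmissibleAt j σ Φ := by
  have heps (E : A.Ch) : (A.restrict T).eps j σ (π E) = A.eps j σ E :=
    eps_restrict_of_subset (hπ E) j σ
  refine exists_congr fun φ => and_congr_right fun _ => ?_
  rw [hsurj.comp_left.forall]
  simp only [Function.comp_def, ← hΨ, heps]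

theorem IsAdmissible.factorsThrough_restrict (hΦ : A.IsAdmissible m Φ)
    (hπ : ∀ E, E.1 ⊆ (π E).1) :
    (fun ℰ => π (Φ ℰ)).FactorsThrough fun (ℰ : Fin m → A.Ch) i => π (ℰ i) := by
  intro ℰ ℱ hℰℱ
  obtain ⟨φ, -, hφ⟩ := hΦ
  have heps (E : A.Ch) (j : {j // j ∈ T}) : (A.restrict T).eps j 1 (π E) = A.eps j 1 E :=
    eps_restrict_of_subset (hπ E) j 1
  refine Ch.ext_eps 1 fun j => ?_
  calc (A.restrict T).eps j 1 (π (Φ ℰ))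
    _ = φ j 1 fun i => (A.restrict T).eps j 1 (π (ℰ i)) := by simp only [heps, hφ]
    _ = φ j 1 fun i => (A.restrict T).eps j 1 (π (ℱ i)) := by simp only [congrFun hℰℱ]
    _ = (A.restrict T).eps j 1 (π (Φ ℱ)) := by simp only [heps, hφ]

end Restrict

section Product

variable {S T : Finset ι} {e : (A.restrict S).Ch × (A.restrict T).Ch ≃ A.Ch}

theorem subset_symm_fst (he : ∀ C D, (e (C, D)).1 = C.1 ∩ D.1) (E : A.Ch) :
    E.1 ⊆ (e.symm E).1.1 := by
  obtain ⟨⟨C, D⟩, rfl⟩ := e.surjective E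
  rw [e.symm_apply_apply, he]
  exact Set.inter_subset_left

theorem subset_symm_snd (he : ∀ C D, (e (C, D)).1 = C.1 ∩ D.1) (E : A.Ch) :
    E.1 ⊆ (e.symm E).2.1 := by
  obtain ⟨⟨C, D⟩, rfl⟩ := e.surjective E
  rw [e.symm_apply_apply, he]
  exact Set.inter_subset_right

theorem IsAdmissible.exists_eq_prodOp (he : ∀ C D, (e (C, D)).1 = C.1 ∩ D.1)
    {Φ : (Fin m → A.Ch) → A.Ch} (hΦ : A.IsAdmissible m Φ) : ∃ Φ₁ Φ₂, Φ = prodOp e Φ₁ Φ₂ :=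
  exists_eq_prodOp_of_factorsThrough e (hΦ.factorsThrough_restrict (subset_symm_fst he))
    (hΦ.factorsThrough_restrict (subset_symm_snd he))

theorem isAdmissible_prodOp_iff (hST : S ∪ T = Finset.univ)
    (he : ∀ C D, (e (C, D)).1 = C.1 ∩ D.1)
    {Φ₁ : (Fin m → (A.restrict S).Ch) → (A.restrict S).Ch}
    {Φ₂ : (Fin m → (A.restrict T).Ch) → (A.restrict T).Ch} :
    A.IsAdmissible m (prodOp e Φ₁ Φ₂) ↔
      (A.restrict S).IsAdmissible m Φ₁ ∧ (A.restrict T).IsAdmissible m Φ₂ := by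
  have hS := isAdmissibleAt_restrict_iff (Φ := prodOp e Φ₁ Φ₂) (Ψ := Φ₁) (subset_symm_fst he)
    (Prod.fst_surjective.comp e.symm.surjective) (fun ℰ => by simp [prodOp])
  have hT := isAdmissibleAt_restrict_iff (Φ := prodOp e Φ₁ Φ₂) (Ψ := Φ₂) (subset_symm_snd he)
    (Prod.snd_surjective.comp e.symm.surjective) (fun ℰ => by simp [prodOp])
  have hcover (j : ι) : j ∈ S ∨ j ∈ T := by simp [← Finset.mem_union, hST]
  simp only [isAdmissible_iff_isAdmissibleAt, hS, hT, Subtype.forall, ← forall_and, ← or_imp,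
    hcover, true_imp_iff]

/-- The bijection `(Φ₁, Φ₂) ↦ Φ₁ × Φ₂` from `AM(𝒜₁, m) × AM(𝒜₂, m)` to `AM(𝒜₁ ⊎ 𝒜₂, m)`, where
`𝒜₁` and `𝒜₂` are the subarrangements indexed by `S` and `T` and `e` is intersection of
chambers. -/
def admissibleProdEquiv (hST : S ∪ T = Finset.univ) (he : ∀ C D, (e (C, D)).1 = C.1 ∩ D.1) :
    {Φ₁ // (A.restrict S).IsAdmissible m Φ₁} × {Φ₂ // (A.restrict T).IsAdmissible m Φ₂} ≃
      {Φ // A.IsAdmissible m Φ} :=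
  Equiv.ofBijective
    (fun P => ⟨prodOp e P.1 P.2, (isAdmissible_prodOp_iff hST he).mpr ⟨P.1.2, P.2.2⟩⟩) <| by
      refine ⟨fun P Q hPQ => ?_, fun ⟨Φ, hΦ⟩ => ?_⟩
      · obtain ⟨h₁, h₂⟩ := prodOp_injective2 e (Subtype.ext_iff.mp hPQ)
        exact Prod.ext (Subtype.ext h₁) (Subtype.ext h₂)
      · obtain ⟨Φ₁, Φ₂, rfl⟩ := hΦ.exists_eq_prodOp he
        obtain ⟨h₁, h₂⟩ := (isAdmissible_prodOp_iff hST he).mp hΦ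
        exact ⟨(⟨Φ₁, h₁⟩, ⟨Φ₂, h₂⟩), rfl⟩

theorem isAdmissible_iff_existsUnique_eq_prodOp (hST : S ∪ T = Finset.univ)
    (he : ∀ C D, (e (C, D)).1 = C.1 ∩ D.1) {Φ : (Fin m → A.Ch) → A.Ch} :
    A.IsAdmissible m Φ ↔ ∃! P : ((Fin m → (A.restrict S).Ch) → (A.restrict S).Ch) ×
        ((Fin m → (A.restrict T).Ch) → (A.restrict T).Ch),
      (A.restrict S).IsAdmissible m P.1 ∧ (A.restrict T).IsAdmissible m P.2 ∧
        Φ = prodOp e P.1 P.2 := by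
  constructor
  · intro hΦ
    obtain ⟨Φ₁, Φ₂, rfl⟩ := hΦ.exists_eq_prodOp he
    obtain ⟨h₁, h₂⟩ := (isAdmissible_prodOp_iff hST he).mp hΦ
    refine ⟨(Φ₁, Φ₂), ⟨h₁, h₂, rfl⟩, fun P hP => ?_⟩
    exact (prodOp_injective2 e).uncurry hP.2.2.symm
  · rintro ⟨P, ⟨h₁, h₂, rfl⟩, -⟩
    exact (isAdmissible_prodOp_iff hST he).mpr ⟨h₁, h₂⟩

end Product

end Arrangement

/-- **Proposition.** If `𝒜 = 𝒜₁ ⊎ 𝒜₂` with `𝒜₁, 𝒜₂` nonempty, then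
`AM(𝒜₁ ⊎ 𝒜₂, m)` is in natural bijection with `AM(𝒜₁, m) × AM(𝒜₂, m)`: identifying
`Ch(𝒜₁ ⊎ 𝒜₂)` with `Ch(𝒜₁) × Ch(𝒜₂)` via intersection of chambers (the equivalence `e`),
a map `Φ` is admissible iff it equals `Φ₁ × Φ₂` for a unique pair of admissible maps
`Φ₁, Φ₂` for `𝒜₁, 𝒜₂`. -/
theorem am_product {ℓ : ℕ} {ι : Type} [Fintype ι] (A : Arrangement ℓ ι)
    (S : Finset ι) (hS : S.Nonempty) (hSc : Sᶜ.Nonempty)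
    (hr : A.rnk = A.rnkOn S + A.rnkOn Sᶜ)
    (m : ℕ) (hm : 0 < m)
    (e : (A.restrict S).Ch × (A.restrict Sᶜ).Ch ≃ A.Ch)
    (he : ∀ (C : (A.restrict S).Ch) (D : (A.restrict Sᶜ).Ch), (e (C, D)).1 = C.1 ∩ D.1) :
    Nonempty ({Φ : (Fin m → A.Ch) → A.Ch // A.IsAdmissible m Φ} ≃
        ({Φ₁ : (Fin m → (A.restrict S).Ch) → (A.restrict S).Ch //
            (A.restrict S).IsAdmissible m Φ₁} ×
         {Φ₂ : (Fin m → (A.restrict Sᶜ).Ch) → (A.restrict Sᶜ).Ch //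
            (A.restrict Sᶜ).IsAdmissible m Φ₂})) ∧
    ∀ Φ : (Fin m → A.Ch) → A.Ch, A.IsAdmissible m Φ ↔
      ∃! ΦΦ : ((Fin m → (A.restrict S).Ch) → (A.restrict S).Ch) ×
              ((Fin m → (A.restrict Sᶜ).Ch) → (A.restrict Sᶜ).Ch),
        (A.restrict S).IsAdmissible m ΦΦ.1 ∧ (A.restrict Sᶜ).IsAdmissible m ΦΦ.2 ∧
        ∀ (𝒞 : Fin m → (A.restrict S).Ch) (𝒟 : Fin m → (A.restrict Sᶜ).Ch),
          Φ (fun i => e (𝒞 i, 𝒟 i)) = e (ΦΦ.1 𝒞, ΦΦ.2 𝒟) := by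
  have hST : S ∪ Sᶜ = Finset.univ := Finset.union_compl S
  refine ⟨⟨(Arrangement.admissibleProdEquiv hST he).symm⟩, fun Φ => ?_⟩
  simp only [← eq_prodOp_iff]
  exact Arrangement.isAdmissible_iff_existsUnique_eq_prodOp hST he
end
end

section
/- Let ℬ = {H₁,…,H_ν} be a circuit (viewed as a central arrangement) with 3 ≤ ν, and let σ ∈ B. Then there exists τ = (τ₁, τ₂, …, τ_ν) ∈ B^ν such that the image of δ_ℬ^σ : Ch(ℬ) → B^ν equals B^ν ∖ {τ, −τ}. -/
/-!
A circuit of linear forms has, up to scaling, a unique linear relation `∑ cⱼ αⱼ = 0`, and no `cⱼ`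
vanishes. The values `(αⱼ x)ⱼ` therefore fill the hyperplane `c^⊥` of `ℝ^ν`. A form has constant
sign on a chamber, so the image of `δ` consists of the sign vectors of the open orthants that meet
`c^⊥`; the sign `σ` does not matter because `x ↦ -x` permutes the chambers. In the orthant of `c`
and in its opposite the sum `∑ cⱼ yⱼ` has a strict sign. In any other orthant the terms `cⱼ yⱼ` take
both signs and can be rescaled to cancel.
-/

noncomputable section
attribute [local instance] Classical.propDecidable

section Relations

variable {ι : Type*} [Fintype ι]

lemma eq_zero_of_linearIndepOn_compl_singleton {R M : Type*} [Ring R] [AddCommGroup M] [Module R M]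
    {f : ι → M} {i : ι}
    (hf : LinearIndepOn R f {i}ᶜ) {d : ι → R} (hd : ∑ j, d j • f j = 0) (hi : d i = 0) :
    d = 0 := by
  have hd' : ∑ j ∈ Finset.univ.erase i, d j • f j = 0 := by
    rwa [Finset.sum_erase _ (by rw [hi, zero_smul])]
  have hzero := linearIndepOn_iff'.1 hf (Finset.univ.erase i) d (by simp) hd'
  funext j
  by_cases hj : j = i
  · rw [hj, hi, Pi.zero_apply]
  · exact hzero j (Finset.mem_erase.2 ⟨hj, Finset.mem_univ j⟩)

lemma exists_relation_forall_ne_zero {K V : Type*} [DivisionRing K] [AddCommGroup V]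
    [Module K V] {f : ι → V} (hdep : ¬ LinearIndependent K f)
    (hmin : ∀ i, LinearIndepOn K f {i}ᶜ) :
    ∃ c : ι → K, (∀ j, c j ≠ 0) ∧
      ∀ d : ι → K, ∑ j, d j • f j = 0 ↔ d ∈ Submodule.span K {c} := by
  obtain ⟨c, hc, k, hk⟩ := Fintype.not_linearIndependent_iff.1 hdep
  have hc0 (j : ι) : c j ≠ 0 := fun hj =>
    hk (congrFun (eq_zero_of_linearIndepOn_compl_singleton (hmin j) hc hj) k)
  refine ⟨c, hc0, fun d => ?_⟩
  rw [Submodule.mem_span_singleton]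
  refine ⟨fun hd => ?_, ?_⟩
  · have hsub : ∑ j, (d - (d k / c k) • c) j • f j = 0 := by
      simp [sub_smul, mul_smul, ← Finset.smul_sum, hd, hc]
    refine ⟨d k / c k, (sub_eq_zero.1 ?_).symm⟩
    exact eq_zero_of_linearIndepOn_compl_singleton (hmin k) hsub (by simp [hk])
  · rintro ⟨a, rfl⟩
    simp [mul_smul, ← Finset.smul_sum, hc]

variable {K V : Type*} [Field K] [AddCommGroup V] [Module K V]

lemma mem_range_pi_iff_forall_relation (f : ι → V →ₗ[K] K) (y : ι → K) :
    y ∈ LinearMap.range (LinearMap.pi f) ↔ ∀ d : ι → K, ∑ j, d j • f j = 0 → d ⬝ᵥ y = 0 := by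
  have dotProduct_pi (d : ι → K) (x : V) : d ⬝ᵥ LinearMap.pi f x = (∑ j, d j • f j) x := by
    simp [dotProduct]
  constructor
  · rintro ⟨x, rfl⟩ d hd
    rw [dotProduct_pi, hd, LinearMap.zero_apply]
  · contrapose!
    intro hy
    obtain ⟨φ, hφy, hφ⟩ := Submodule.exists_le_ker_of_notMem hy
    obtain ⟨d, rfl⟩ := (dotProductEquiv K ι).surjective φ
    refine ⟨d, LinearMap.ext fun x => ?_, hφy⟩
    rw [← dotProduct_pi]
    exact hφ ⟨x, rfl⟩

lemma exists_mem_range_pi_iff_dotProduct_eq_zero {f : ι → V →ₗ[K] K}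
    (hdep : ¬ LinearIndependent K f) (hmin : ∀ i, LinearIndepOn K f {i}ᶜ) :
    ∃ c : ι → K, (∀ j, c j ≠ 0) ∧
      ∀ y, y ∈ LinearMap.range (LinearMap.pi f) ↔ c ⬝ᵥ y = 0 := by
  obtain ⟨c, hc, hrel⟩ := exists_relation_forall_ne_zero hdep hmin
  refine ⟨c, hc, fun y => ?_⟩
  simp only [mem_range_pi_iff_forall_relation, hrel, Submodule.mem_span_singleton]
  constructor
  · exact fun h => h c ⟨1, one_smul K c⟩
  · rintro hy _ ⟨a, rfl⟩
    rw [smul_dotProduct, hy, smul_zero]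

end Relations

section Orthants

variable {ι R : Type*} [Ring R] [LinearOrder R]

/-- The open orthant of `R^ι` with sign vector `s`: the points `y` whose coordinates `y j` are
nonzero of sign `s j`. Signs are elements of `ℤˣ`, as in `Arrangement.eps`, and act on `R` by scalar
multiplication; the image of `δ` is described by the orthants that the values of the forms meet. -/
def openOrthant (R : Type*) {ι : Type*} [Ring R] [LinearOrder R] (s : ι → ℤˣ) : Set (ι → R) :=
  {y | ∀ j, 0 < s j • y j}

lemma ne_zero_of_mem_openOrthant {s : ι → ℤˣ} {y : ι → R} (hy : y ∈ openOrthant R s) (j : ι) :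
    y j ≠ 0 := fun h => by
  simpa [h] using hy j

lemma neg_mem_openOrthant_neg {s : ι → ℤˣ} {y : ι → R} (hy : y ∈ openOrthant R s) :
    -y ∈ openOrthant R (-s) := fun j => by
  simpa using hy j

variable [IsStrictOrderedRing R]

lemma exists_units_smul_pos {r : R} (hr : r ≠ 0) : ∃ u : ℤˣ, 0 < u • r := by
  rcases hr.lt_or_gt with h | h
  · exact ⟨-1, by simpa using h⟩
  · exact ⟨1, by simpa using h⟩

lemma units_eq_of_smul_pos {u v : ℤˣ} {r : R} (hu : 0 < u • r) (hv : 0 < v • r) : u = v := by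
  by_contra huv
  rw [Int.units_ne_iff_eq_neg.1 huv, Units.neg_smul, neg_pos] at hu
  exact hu.not_gt hv

lemma exists_mem_openOrthant {y : ι → R} (hy : ∀ j, y j ≠ 0) : ∃ s, y ∈ openOrthant R s :=
  Classical.skolem.1 fun j => exists_units_smul_pos (hy j)

lemma mul_mem_openOrthant_mul {s t : ι → ℤˣ} {x y : ι → R} (hx : x ∈ openOrthant R s)
    (hy : y ∈ openOrthant R t) : x * y ∈ openOrthant R (s * t) := fun j => by
  simpa only [Pi.mul_apply, smul_mul_smul_comm] using mul_pos (hx j) (hy j)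

lemma dotProduct_pos_of_mem_openOrthant [Fintype ι] [Nonempty ι] {s : ι → ℤˣ} {x y : ι → R}
    (hx : x ∈ openOrthant R s) (hy : y ∈ openOrthant R s) : 0 < x ⬝ᵥ y := by
  refine Finset.sum_pos (fun j _ => ?_) Finset.univ_nonempty
  simpa [Int.units_mul_self] using mul_mem_openOrthant_mul hx hy j

-- The witness `w j = ∑ k, (t j - t k)` sums to zero by antisymmetry.
lemma exists_mem_openOrthant_sum_eq_zero [Fintype ι] {t : ι → ℤˣ} (hone : t ≠ 1) (hneg : t ≠ -1) :
    ∃ w ∈ openOrthant R t, ∑ j, w j = 0 := by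
  have exists_ne (j : ι) : ∃ k, t k ≠ t j := by
    by_contra! hconst
    rcases Int.units_eq_one_or (t j) with hj | hj
    · exact hone (funext fun k => (hconst k).trans hj)
    · exact hneg (funext fun k => (hconst k).trans hj)
  refine ⟨fun j => ∑ k, (t j • (1 : R) - t k • 1), fun j => ?_, ?_⟩
  · have smul_diff (k : ι) : t j • (t j • (1 : R) - t k • 1) = 1 - (t j * t k) • 1 := by
      rw [smul_sub, smul_smul, smul_smul, Int.units_mul_self, one_smul]
    obtain ⟨k, hk⟩ := exists_ne j
    simp only [Finset.smul_sum, smul_diff]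
    refine Finset.sum_pos' (fun i _ => ?_) ⟨k, Finset.mem_univ k, ?_⟩
    · rcases Int.units_eq_one_or (t j * t i) with h | h <;> simp [h]
    · simp [Int.units_ne_iff_eq_neg.1 hk]
  · simp only [Finset.sum_sub_distrib]
    rw [Finset.sum_comm, sub_self]

variable {K : Type*} [Field K] [LinearOrder K] [IsStrictOrderedRing K]

lemma inv_mem_openOrthant {s : ι → ℤˣ} {y : ι → K} (hy : y ∈ openOrthant K s) :
    y⁻¹ ∈ openOrthant K s := fun j => by
  have h := hy j
  rcases Int.units_eq_one_or (s j) with hs | hs <;> simpa [hs] using h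

lemma exists_mem_openOrthant_dotProduct_eq_zero_iff [Fintype ι]
    [Nonempty ι] {c : ι → K} {τ : ι → ℤˣ} (hc : c ∈ openOrthant K τ) (s : ι → ℤˣ) :
    (∃ y ∈ openOrthant K s, c ⬝ᵥ y = 0) ↔ s ≠ τ ∧ s ≠ -τ := by
  constructor
  · rintro ⟨y, hy, hcy⟩
    constructor <;> rintro rfl
    · exact (dotProduct_pos_of_mem_openOrthant hc hy).ne' hcy
    · have hpos := dotProduct_pos_of_mem_openOrthant (neg_mem_openOrthant_neg hc) hy
      rw [neg_dotProduct, hcy, neg_zero] at hpos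
      exact hpos.false
  · rintro ⟨hs, hs'⟩
    obtain ⟨t, rfl⟩ : ∃ t, s = τ * t := (mul_left_surjective τ s).imp fun _ => Eq.symm
    obtain ⟨w, hw, hsum⟩ := exists_mem_openOrthant_sum_eq_zero (R := K)
      (fun ht : t = 1 => hs (by rw [ht, mul_one])) (fun ht => hs' (by rw [ht, mul_neg_one]))
    refine ⟨c⁻¹ * w, mul_mem_openOrthant_mul (inv_mem_openOrthant hc) hw, ?_⟩
    rw [← hsum]
    exact Finset.sum_congr rfl fun j _ => mul_inv_cancel_left₀ (ne_zero_of_mem_openOrthant hc j) _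

end Orthants

namespace Arrangement

variable {ℓ : ℕ} {ι : Type} [Fintype ι]

lemma rnkOn_eq_finrank_span (A : Arrangement ℓ ι) (S : Finset ι) :
    A.rnkOn S = Module.finrank ℝ (Submodule.span ℝ (A.form '' S)) := by
  have hker : ⨅ j ∈ S, LinearMap.ker (A.form j) =
      (Submodule.span ℝ (A.form '' S)).dualCoannihilator := by
    ext x
    rw [← SetLike.mem_coe (p := Submodule.dualCoannihilator _),
      Submodule.coe_dualCoannihilator_span]
    simp only [Submodule.mem_iInf, LinearMap.mem_ker, Set.mem_ofPred_eq, Set.forall_mem_image,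
      Finset.mem_coe]
  have hdim := Subspace.finrank_add_finrank_dualCoannihilator_eq (Submodule.span ℝ (A.form '' S))
  rw [Module.finrank_fin_fun] at hdim
  rw [rnkOn, hker]
  exact Nat.sub_eq_of_eq_add hdim.symm

lemma dependentOn_iff_not_linearIndepOn (A : Arrangement ℓ ι) (S : Finset ι) :
    A.DependentOn S ↔ ¬ LinearIndepOn ℝ A.form (S : Set ι) := by
  rw [LinearIndepOn, linearIndependent_iff_card_le_finrank_span, not_le, DependentOn,
    rnkOn_eq_finrank_span, Set.finrank, Set.image_eq_range]
  simp

lemma IsCircuitOn.not_linearIndependent {A : Arrangement ℓ ι} (hA : A.IsCircuitOn Finset.univ) :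
    ¬ LinearIndependent ℝ A.form := by
  rw [← linearIndepOn_univ_iff, ← Finset.coe_univ]
  exact (A.dependentOn_iff_not_linearIndepOn _).1 hA.1

lemma IsCircuitOn.linearIndepOn_compl_singleton {A : Arrangement ℓ ι}
    (hA : A.IsCircuitOn Finset.univ) (i : ι) : LinearIndepOn ℝ A.form {i}ᶜ := by
  have h := hA.2 {i}ᶜ (by simp [Finset.ssubset_univ_iff])
  rw [dependentOn_iff_not_linearIndepOn, not_not] at h
  simpa using h

lemma form_ne_zero_of_mem_chamber (A : Arrangement ℓ ι) (j : ι) (C : A.Ch) {x : Fin ℓ → ℝ}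
    (hx : x ∈ C.1) : A.form j x ≠ 0 := by
  obtain ⟨_, z, _, rfl⟩ := C
  exact connectedComponentIn_subset _ _ hx j

lemma forall_mem_chamber_form_pos_iff (A : Arrangement ℓ ι) (j : ι) (C : A.Ch) {x : Fin ℓ → ℝ}
    (hx : x ∈ C.1) : (∀ w ∈ C.1, 0 < A.form j w) ↔ 0 < A.form j x := by
  have hC : IsPreconnected C.1 := by
    obtain ⟨_, z, _, rfl⟩ := C
    exact isPreconnected_connectedComponentIn
  have himage := hC.image _ (A.form j).continuous_of_finiteDimensional.continuousOn
  refine ⟨fun h => h x hx, fun h w hw => ?_⟩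
  by_contra! hle
  obtain ⟨v, hv, hv0⟩ := himage.ordConnected.out ⟨w, hw, rfl⟩ ⟨x, hx, rfl⟩ ⟨hle, h.le⟩
  exact A.form_ne_zero_of_mem_chamber j C hv hv0

lemma form_units_smul (A : Arrangement ℓ ι) (j : ι) (σ : ℤˣ) (x : Fin ℓ → ℝ) :
    A.form j (σ • x) = σ • A.form j x :=
  map_zsmul _ _ _

lemma eps_smul_form_pos (A : Arrangement ℓ ι) (j : ι) (σ : ℤˣ) (C : A.Ch) {x : Fin ℓ → ℝ}
    (hx : x ∈ C.1) : 0 < A.eps j σ C • A.form j (σ • x) := by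
  simp only [eps, A.forall_mem_chamber_form_pos_iff j C hx]
  rw [form_units_smul, smul_smul, mul_right_comm, Int.units_mul_self, one_mul]
  split_ifs with hpos
  · rwa [one_smul]
  · have hneg := (A.form_ne_zero_of_mem_chamber j C hx).lt_of_le (not_lt.1 hpos)
    rwa [Units.neg_smul, one_smul, neg_pos]

lemma mem_range_delta_iff (A : Arrangement ℓ ι) (σ : ℤˣ) (s : ι → ℤˣ) :
    s ∈ Set.range (fun C : A.Ch => fun j => A.eps j σ C) ↔
      ∃ y ∈ openOrthant ℝ s, y ∈ LinearMap.range (LinearMap.pi A.form) := by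
  constructor
  · rintro ⟨C, rfl⟩
    obtain ⟨x, hx⟩ : C.1.Nonempty := by
      obtain ⟨_, x, hx, rfl⟩ := C
      exact ⟨x, mem_connectedComponentIn hx⟩
    exact ⟨_, fun j => A.eps_smul_form_pos j σ C hx, σ • x, rfl⟩
  · rintro ⟨_, hy, x, rfl⟩
    have hx : σ • x ∈ A.Complement := fun j h => by
      rw [form_units_smul, smul_eq_zero_iff_eq] at h
      exact ne_zero_of_mem_openOrthant hy j h
    refine ⟨⟨_, σ • x, hx, rfl⟩, funext fun j => units_eq_of_smul_pos ?_ (hy j)⟩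
    have hpos := A.eps_smul_form_pos j σ ⟨_, σ • x, hx, rfl⟩ (mem_connectedComponentIn hx)
    rwa [smul_smul, Int.units_mul_self, one_smul] at hpos

end Arrangement

theorem image_delta_of_circuit_general {ℓ : ℕ} {ι : Type} [Fintype ι] (A : Arrangement ℓ ι)
    (hcir : A.IsCircuitOn Finset.univ) (σ : ℤˣ) :
    ∃ τ : ι → ℤˣ,
      Set.range (fun C : A.Ch => fun j => A.eps j σ C) = Set.univ \ {τ, -τ} := by
  have : Nonempty ι := by
    by_contra! hempty
    exact hcir.not_linearIndependent linearIndependent_empty_type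
  obtain ⟨c, hc, hrange⟩ := exists_mem_range_pi_iff_dotProduct_eq_zero
    hcir.not_linearIndependent hcir.linearIndepOn_compl_singleton
  obtain ⟨τ, hτ⟩ := exists_mem_openOrthant hc
  refine ⟨τ, Set.ext fun s => ?_⟩
  simp only [A.mem_range_delta_iff, hrange, exists_mem_openOrthant_dotProduct_eq_zero_iff hτ,
    Set.mem_sdiff, Set.mem_univ, true_and, Set.mem_insert_iff, Set.mem_singleton_iff, not_or, ne_eq]

/-- **Lemma.** If `ℬ = {H₁,…,H_ν}` is a circuit with `ν ≥ 3` and `σ ∈ B`, then there is a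
`τ ∈ B^ν` with `im δ_ℬ^σ = B^ν ∖ {τ, −τ}`, where `δ_ℬ^σ(C) = (ε₁^σ(C), …, ε_ν^σ(C))`. -/
theorem image_delta_of_circuit (ℓ ν : ℕ) (hν : 3 ≤ ν) (A : Arrangement ℓ (Fin ν))
    (hcir : A.IsCircuitOn Finset.univ) (σ : ℤˣ) :
    ∃ τ : Fin ν → ℤˣ,
      Set.range (fun C : A.Ch => fun j => A.eps j σ C) =
        Set.univ \ {τ, -τ} := by
  exact image_delta_of_circuit_general A hcir σ
end
end

section
/- Let 𝒜 = {H₁,…,Hₙ} be an indecomposable real central arrangement with n = |𝒜| ≥ 3, m a positive integer, and Φ : Ch^m → Ch an admissible map whose (uniquely determined, j- and σ-independent) associated map is φ : B^m → B. Define K = {S ⊆ {1,…,m} : φ(S₊) = +}. Then: (1) {1,…,m} ∈ K; (2) S ∈ K if and only if S^c ∉ K; and (3) if S₁ ∈ K and S₂ ∈ K then S₁ ∩ S₂ ∈ K. -/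
/-!
Each of the three properties of `K` is read off from the forms `αⱼ` at suitable points. If `x i`
lies in the `i`-th chamber `C i`, `y` lies in `Φ(C)`, and `c ≠ 0`, then `{i | c αⱼ(x i) > 0} ∈ K`
if and only if `c αⱼ(y) > 0`. Comparing `c = 1` with `c = -1` gives the complement rule.

For intersections, an indecomposable arrangement of at least two hyperplanes has dependent forms,
so some `α_b` is a combination `∑_{j ∈ T} cⱼ αⱼ` of independent forms with all `cⱼ ≠ 0` and
`b ∉ T`; as the hyperplanes are distinct, `T` has at least two elements. By independence there are
points at which the `cⱼ αⱼ`, `j ∈ T`, take any prescribed nonzero values. Large negative values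
make `α_b` negative as soon as one `cⱼ αⱼ` is. Hence for `Fⱼ ∈ K` the points `x i` can be chosen
with `cⱼ αⱼ(x i) > 0` iff `i ∈ Fⱼ`, and `α_b(x i) > 0` iff `i ∈ ⋂ⱼ Fⱼ`. Then every `cⱼ αⱼ(y)` is
positive, hence so is `α_b(y)`, and `⋂ⱼ Fⱼ ∈ K`.
-/

noncomputable section
attribute [local instance] Classical.propDecidable

/-- For `S ⊆ {1,…,m}`, the sign vector `S₊ ∈ B^m`: `+` on `S` and `−` off `S`. -/
def Splus (m : ℕ) (S : Set (Fin m)) : Fin m → ℤˣ := fun i => if i ∈ S then 1 else -1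

open scoped Topology

section LinearAlgebra

variable {𝕜 V ι : Type*} [Field 𝕜] [AddCommGroup V] [Module 𝕜 V]

lemma exists_linearCombination_eq_of_not_linearIndependent {v : ι → V}
    (hv : ¬ LinearIndependent 𝕜 v) :
    ∃ (b : ι) (c : ι →₀ 𝕜), b ∉ c.support ∧ LinearIndepOn 𝕜 v c.support ∧
      Finsupp.linearCombination 𝕜 v c = v b := by
  obtain ⟨s, -, -, hspan, hs⟩ :=
    exists_linearIndepOn_extension (linearIndepOn_empty 𝕜 v) (Set.empty_subset Set.univ)
  obtain ⟨b, hb⟩ : ∃ b, b ∉ s := by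
    by_contra! h
    exact hv (linearIndepOn_univ_iff.mp (Set.eq_univ_of_forall h ▸ hs))
  obtain ⟨c, hc, hcb⟩ := (Finsupp.mem_span_image_iff_linearCombination 𝕜).mp
    (hspan (Set.mem_image_of_mem v (Set.mem_univ b)))
  exact ⟨b, c, fun h => hb (hc h), hs.mono hc, hcb⟩

lemma pi_surjective_of_linearIndependent [Finite ι] {f : ι → Module.Dual 𝕜 V}
    (hf : LinearIndependent 𝕜 f) : Function.Surjective (LinearMap.pi f) := by
  have := Fintype.ofFinite ι
  rw [← LinearMap.dualMap_injective_iff, injective_iff_map_eq_zero]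
  intro g hg
  have hsingle : ∀ j, (Pi.single j 1 : ι → 𝕜) = fun i => if j = i then 1 else 0 := fun j => by
    ext i
    simp [Pi.single_apply, eq_comm]
  have hrel : ∑ j, g (Pi.single j 1) • f j = 0 := by
    ext x
    have hgx : g (LinearMap.pi f x) = 0 := LinearMap.congr_fun hg x
    rw [LinearMap.pi_apply_eq_sum_univ g] at hgx
    simpa only [hsingle, LinearMap.sum_apply, LinearMap.smul_apply, LinearMap.zero_apply,
      LinearMap.pi_apply, smul_eq_mul, mul_comm] using hgx
  ext j
  simpa using Fintype.linearIndependent_iff.mp hf _ hrel j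

end LinearAlgebra

section SignPatterns

variable {V ι : Type*} [AddCommGroup V] [Module ℝ V]

lemma sum_ite_neg_card_neg {s : Finset ι} {P : ι → Prop} {k : ι} (hk : k ∈ s) (hPk : ¬ P k) :
    ∑ j ∈ s, (if P j then (1 : ℝ) else -s.card) < 0 := by
  have hrest : ∑ j ∈ s.erase k, (if P j then (1 : ℝ) else -s.card) ≤ (s.erase k).card • 1 :=
    Finset.sum_le_card_nsmul _ _ _ fun j _ => by
      split_ifs
      · exact le_rfl
      · linarith [Nat.cast_nonneg (α := ℝ) s.card]
  have hcard : ((s.erase k).card : ℝ) + 1 = s.card := mod_cast Finset.card_erase_add_one hk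
  rw [nsmul_one] at hrest
  rw [← Finset.add_sum_erase s _ hk, if_neg hPk]
  linarith

lemma exists_pos_iff_of_linearIndepOn {f : ι → Module.Dual ℝ V} {c : ι →₀ ℝ}
    (hf : LinearIndepOn ℝ f c.support) (hc : c ≠ 0) (P : ι → Prop) :
    ∃ x, (∀ j ∈ c.support, f j x ≠ 0 ∧ (0 < c j * f j x ↔ P j)) ∧
      Finsupp.linearCombination ℝ f c x ≠ 0 ∧
      (0 < Finsupp.linearCombination ℝ f c x ↔ ∀ j ∈ c.support, P j) := by
  have hcard : (0 : ℝ) < c.support.card :=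
    Nat.cast_pos.mpr (Finset.card_pos.mpr (Finsupp.support_nonempty_iff.mpr hc))
  let w : ι → ℝ := fun j => if P j then 1 else -c.support.card
  obtain ⟨x, hx⟩ := pi_surjective_of_linearIndependent hf fun j => (c j)⁻¹ * w j
  have hcx : ∀ j ∈ c.support, c j * f j x = w j := fun j hj => by
    have hfx : f j x = (c j)⁻¹ * w j := congrFun hx ⟨j, hj⟩
    rw [hfx, mul_inv_cancel_left₀ (Finsupp.mem_support_iff.mp hj)]
  have hsum : Finsupp.linearCombination ℝ f c x = ∑ j ∈ c.support, w j := by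
    rw [← Finset.sum_congr rfl hcx]
    simp [Finsupp.linearCombination_apply, Finsupp.sum]
  refine ⟨x, fun j hj => ?_, ?_⟩
  · have hw : w j ≠ 0 ∧ (0 < w j ↔ P j) := by
      by_cases hP : P j <;> simp [w, hP, hc]
    exact ⟨right_ne_zero_of_mul (hcx j hj ▸ hw.1), hcx j hj ▸ hw.2⟩
  · rw [hsum]
    by_cases hP : ∀ j ∈ c.support, P j
    · have hpos : 0 < ∑ j ∈ c.support, w j := by
        rw [Finset.sum_congr rfl fun j hj => if_pos (hP j hj)]
        simpa using hcard
      exact ⟨hpos.ne', iff_of_true hpos hP⟩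
    · obtain ⟨k, hk, hPk⟩ : ∃ k ∈ c.support, ¬ P k := by simpa using hP
      have hneg : ∑ j ∈ c.support, w j < 0 := sum_ite_neg_card_neg hk hPk
      exact ⟨hneg.ne, iff_of_false hneg.not_gt hP⟩

end SignPatterns

section PositiveSets

variable {I : Type*}

/-- The sign vector `S₊ ∈ B^I` of a subset `S` of an arbitrary index type `I`; for `I = Fin m` it is
definitionally `Splus m S`. -/
def signVector (S : Set I) : I → ℤˣ := fun i => if i ∈ S then 1 else -1

/-- The family `K` of sets whose sign vector `φ` sends to `+`. -/
def positiveSets (φ : (I → ℤˣ) → ℤˣ) : Set (Set I) := {S | φ (signVector S) = 1}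

lemma eq_signVector_iff {s : I → ℤˣ} {S : Set I} :
    s = signVector S ↔ ∀ i, s i = 1 ↔ i ∈ S := by
  refine funext_iff.trans (forall_congr' fun i => ?_)
  by_cases hi : i ∈ S <;> simp [signVector, hi, ← Int.units_ne_iff_eq_neg]

lemma univ_mem_positiveSets {φ : (I → ℤˣ) → ℤˣ} (hunit : φ (fun _ => 1) = 1) :
    Set.univ ∈ positiveSets φ := by
  have huniv : (fun _ => 1) = signVector (Set.univ : Set I) := eq_signVector_iff.mpr (by simp)
  rwa [huniv] at hunit

end PositiveSets

namespace Arrangement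

variable {ℓ : ℕ} {ι : Type} [Fintype ι] {A : Arrangement ℓ ι}

lemma rnkOn_eq_card {S : Finset ι} (hS : LinearIndepOn ℝ A.form S) : A.rnkOn S = S.card := by
  let L := LinearMap.pi fun j : S => A.form j
  have hker : ⨅ j ∈ S, LinearMap.ker (A.form j) = LinearMap.ker L := by
    rw [LinearMap.ker_pi, iInf_subtype']
  have hrange : LinearMap.range L = ⊤ :=
    LinearMap.range_eq_top.mpr (pi_surjective_of_linearIndependent hS)
  have hrank := L.finrank_range_add_finrank_ker
  rw [hrange, finrank_top, Module.finrank_fintype_fun_eq_card, Fintype.card_coe,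
    Module.finrank_fin_fun] at hrank
  rw [rnkOn, hker]
  omega

lemma decomposable_of_linearIndependent [Nontrivial ι] (h : LinearIndependent ℝ A.form) :
    A.Decomposable := by
  obtain ⟨a, b, hab⟩ := exists_pair_ne ι
  refine ⟨{a}, {a}ᶜ, by simp, ⟨b, by simpa using hab.symm⟩, disjoint_compl_right, by simp, ?_⟩
  have hrank : ∀ S : Finset ι, A.rnkOn S = S.card := fun S => rnkOn_eq_card (h.linearIndepOn S)
  simp only [hrank, Finset.card_add_card_compl, Finset.card_univ]

lemma support_nontrivial_of_linearCombination_eq {b : ι} {c : ι →₀ ℝ} (hb : b ∉ c.support)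
    (hcb : Finsupp.linearCombination ℝ A.form c = A.form b) : c.support.Nontrivial := by
  rw [Finsupp.linearCombination_apply, Finsupp.sum] at hcb
  have hne : c.support.Nonempty := by
    rw [Finset.nonempty_iff_ne_empty]
    intro h
    exact A.form_ne_zero b (by rw [← hcb, h, Finset.sum_empty])
  refine hne.exists_eq_singleton_or_nontrivial.resolve_left fun ⟨k, hk⟩ => hb ?_
  have hck : c k ≠ 0 := Finsupp.mem_support_iff.mp (hk ▸ Finset.mem_singleton_self k)
  have hbk : b = k := A.ker_injective b k <| by
    rw [← hcb, hk, Finset.sum_singleton, LinearMap.ker_smul _ _ hck]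
  exact hbk ▸ Finsupp.mem_support_iff.mpr hck

lemma dense_complement (A : Arrangement ℓ ι) : Dense A.Complement := by
  have hopen : ∀ j, IsOpen {x | A.form j x ≠ 0} := fun j =>
    isOpen_ne_fun (A.form j).continuous_of_finiteDimensional continuous_const
  have hdense : ∀ j, Dense {x | A.form j x ≠ 0} := fun j => by
    refine interior_eq_empty_iff_dense_compl.mp (Set.not_nonempty_iff_eq_empty.mp fun h => ?_)
    exact A.form_ne_zero j
      (LinearMap.ker_eq_top.mp ((LinearMap.ker (A.form j)).eq_top_of_nonempty_interior' h))
  have hcompl : A.Complement = ⋂ j, {x | A.form j x ≠ 0} := by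
    ext x
    simp [Complement]
  exact hcompl ▸ dense_iInter_of_isOpen hopen hdense

lemma exists_mem_complement_sign_eq (A : Arrangement ℓ ι) (x : Fin ℓ → ℝ) :
    ∃ z ∈ A.Complement,
      ∀ j, A.form j x ≠ 0 → SignType.sign (A.form j z) = SignType.sign (A.form j x) := by
  have hev : ∀ᶠ z in 𝓝 x,
      ∀ j, A.form j x ≠ 0 → SignType.sign (A.form j z) = SignType.sign (A.form j x) := by
    refine Filter.eventually_all.mpr fun j => Filter.eventually_imp_distrib_left.mpr fun hj => ?_
    have hcont : ContinuousAt (fun z => SignType.sign (A.form j z)) x :=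
      (continuousAt_sign_of_ne_zero hj).comp
        (A.form j).continuous_of_finiteDimensional.continuousAt
    exact hcont.eventually_mem ((isOpen_discrete {_}).mem_nhds rfl)
  exact ((mem_closure_iff_frequently.mp (A.dense_complement x)).and_eventually hev).exists

lemma exists_mem_complement_pos_iff (A : Arrangement ℓ ι) (j : ι) (p : Prop) :
    ∃ x ∈ A.Complement, 0 < A.form j x ↔ p := by
  obtain ⟨z, hz⟩ := A.dense_complement.nonempty
  by_cases hzp : 0 < A.form j z ↔ p
  · exact ⟨z, hz, hzp⟩
  · refine ⟨-z, fun k => by simpa using hz k, ?_⟩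
    rw [map_neg, neg_pos, ← (hz j).le_iff_lt, ← not_lt]
    tauto

lemma exists_mem_complement_forall_pos_iff {b : ι} {c : ι →₀ ℝ}
    (hind : LinearIndepOn ℝ A.form c.support)
    (hcb : Finsupp.linearCombination ℝ A.form c = A.form b) (P : ι → Prop) :
    ∃ z ∈ A.Complement, (∀ j ∈ c.support, 0 < c j * A.form j z ↔ P j) ∧
      (0 < A.form b z ↔ ∀ j ∈ c.support, P j) := by
  have hc : c ≠ 0 := by
    rintro rfl
    exact A.form_ne_zero b (by rw [← hcb, map_zero])
  obtain ⟨x, hx, hxb_ne, hxb⟩ := exists_pos_iff_of_linearIndepOn hind hc P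
  rw [hcb] at hxb_ne hxb
  obtain ⟨z, hz, hsign⟩ := A.exists_mem_complement_sign_eq x
  refine ⟨z, hz, fun j hj => ?_, ?_⟩
  · rw [← (hx j hj).2, ← sign_eq_one_iff, ← sign_eq_one_iff, sign_mul, sign_mul,
      hsign j (hx j hj).1]
  · rw [← hxb, ← sign_eq_one_iff, ← sign_eq_one_iff, hsign b hxb_ne]

/-- The chamber containing a given point of the complement. -/
def chamberOf {x : Fin ℓ → ℝ} (hx : x ∈ A.Complement) : A.Ch :=
  ⟨connectedComponentIn A.Complement x, x, hx, rfl⟩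

lemma mem_chamberOf {x : Fin ℓ → ℝ} (hx : x ∈ A.Complement) : x ∈ (chamberOf hx).1 :=
  mem_connectedComponentIn hx

lemma Ch.nonempty_s19 (C : A.Ch) : C.1.Nonempty := by
  obtain ⟨_, x, hx, rfl⟩ := C
  exact ⟨x, mem_connectedComponentIn hx⟩

lemma Ch.subset_complement_s19 (C : A.Ch) : C.1 ⊆ A.Complement := by
  obtain ⟨_, x, -, rfl⟩ := C
  exact connectedComponentIn_subset _ _

lemma Ch.isPreconnected (C : A.Ch) : IsPreconnected C.1 := by
  obtain ⟨_, x, -, rfl⟩ := C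
  exact isPreconnected_connectedComponentIn

lemma forall_mem_form_pos_iff {C : A.Ch} {x : Fin ℓ → ℝ} (hx : x ∈ C.1) (j : ι) :
    (∀ y ∈ C.1, 0 < A.form j y) ↔ 0 < A.form j x := by
  refine ⟨fun h => h x hx, fun h y hy => ?_⟩
  by_contra! hneg
  obtain ⟨z, hz, hz0⟩ := C.isPreconnected.intermediate_value hy hx
    (A.form j).continuous_of_finiteDimensional.continuousOn ⟨hneg, h.le⟩
  exact C.subset_complement_s19 hz j hz0

lemma exists_eps_eq_one_iff (A : Arrangement ℓ ι) {c : ℝ} (hc : c ≠ 0) (j : ι) :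
    ∃ σ, ∀ (C : A.Ch), ∀ x ∈ C.1, A.eps j σ C = 1 ↔ 0 < c * A.form j x := by
  rcases hc.lt_or_gt with hneg | hpos
  · refine ⟨-1, fun C x hx => ?_⟩
    have hxj : A.form j x ≠ 0 := C.subset_complement_s19 hx j
    rw [eps, forall_mem_form_pos_iff hx, ← neg_mul_neg c,
      mul_pos_iff_of_pos_left (neg_pos.mpr hneg), neg_pos, ← hxj.le_iff_lt, ← not_lt]
    by_cases h : 0 < A.form j x <;> simp [h]
  · refine ⟨1, fun C x hx => ?_⟩
    rw [eps, forall_mem_form_pos_iff hx, mul_pos_iff_of_pos_left hpos]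
    by_cases h : 0 < A.form j x <;> simp [h]

variable {I : Type*} {Φ : (I → A.Ch) → A.Ch} {φ : (I → ℤˣ) → ℤˣ}

/-- The relation `εⱼ^σ ∘ Φ = φ ∘ εⱼ^σ` for all `j` and `σ`, which makes `φ` the map associated to
`Φ`; the index type `I` replaces `{1,…,m}`. -/
def Intertwines (A : Arrangement ℓ ι) (Φ : (I → A.Ch) → A.Ch) (φ : (I → ℤˣ) → ℤˣ) : Prop :=
  ∀ j σ 𝒞, A.eps j σ (Φ 𝒞) = φ fun i => A.eps j σ (𝒞 i)

namespace Intertwines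

lemma mem_positiveSets_iff (hΦ : A.Intertwines Φ φ) {𝒞 : I → A.Ch} {x : I → Fin ℓ → ℝ}
    {y : Fin ℓ → ℝ} (hx : ∀ i, x i ∈ (𝒞 i).1) (hy : y ∈ (Φ 𝒞).1) {c : ℝ} (hc : c ≠ 0) {j : ι}
    {S : Set I} (hS : ∀ i, 0 < c * A.form j (x i) ↔ i ∈ S) :
    S ∈ positiveSets φ ↔ 0 < c * A.form j y := by
  obtain ⟨σ, hσ⟩ := A.exists_eps_eq_one_iff hc j
  have hsign : (fun i => A.eps j σ (𝒞 i)) = signVector S :=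
    eq_signVector_iff.mpr fun i => (hσ (𝒞 i) (x i) (hx i)).trans (hS i)
  rw [← hσ (Φ 𝒞) y hy, hΦ, hsign]
  rfl

lemma mem_positiveSets_iff_compl_notMem [Nonempty ι] (hΦ : A.Intertwines Φ φ) (S : Set I) :
    S ∈ positiveSets φ ↔ Sᶜ ∉ positiveSets φ := by
  obtain ⟨j⟩ := ‹Nonempty ι›
  choose x hx hxS using fun i => A.exists_mem_complement_pos_iff j (i ∈ S)
  obtain ⟨y, hy⟩ := (Φ fun i => chamberOf (hx i)).nonempty_s19
  have hmem := fun i => mem_chamberOf (hx i)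
  have hyj : A.form j y ≠ 0 := (Φ _).subset_complement_s19 hy j
  rw [hΦ.mem_positiveSets_iff hmem hy (c := 1) (j := j) one_ne_zero (by simpa using hxS),
    hΦ.mem_positiveSets_iff hmem hy (c := -1) (j := j) (by norm_num)
      fun i => by
        rw [Set.mem_compl_iff, ← hxS, neg_one_mul, neg_pos, ← (hx i j).le_iff_lt, not_lt],
    one_mul, neg_one_mul, neg_pos, not_lt, hyj.symm.le_iff_lt]

lemma iInter_mem_positiveSets (hΦ : A.Intertwines Φ φ) {b : ι} {c : ι →₀ ℝ}
    (hind : LinearIndepOn ℝ A.form c.support)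
    (hcb : Finsupp.linearCombination ℝ A.form c = A.form b)
    {F : ι → Set I} (hF : ∀ j ∈ c.support, F j ∈ positiveSets φ) :
    ⋂ j ∈ c.support, F j ∈ positiveSets φ := by
  choose x hx hxF hxb using fun i =>
    exists_mem_complement_forall_pos_iff hind hcb fun j => i ∈ F j
  obtain ⟨y, hy⟩ := (Φ fun i => chamberOf (hx i)).nonempty_s19
  have hmem := fun i => mem_chamberOf (hx i)
  have hterm : ∀ j ∈ c.support, 0 < c j * A.form j y := fun j hj =>
    (hΦ.mem_positiveSets_iff hmem hy (Finsupp.mem_support_iff.mp hj) fun i => hxF i j hj).mp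
      (hF j hj)
  have hyb : 0 ≤ A.form b y := by
    rw [← hcb, Finsupp.linearCombination_apply, Finsupp.sum, LinearMap.sum_apply]
    exact Finset.sum_nonneg fun j hj => (hterm j hj).le
  have hyb_ne : A.form b y ≠ 0 := (Φ _).subset_complement_s19 hy b
  rw [hΦ.mem_positiveSets_iff hmem hy (c := 1) (j := b) one_ne_zero (by simpa using hxb), one_mul]
  exact hyb.lt_of_ne' hyb_ne

lemma inter_mem_positiveSets (hΦ : A.Intertwines Φ φ) (hA : ¬ LinearIndependent ℝ A.form)
    {S₁ S₂ : Set I} (hS₁ : S₁ ∈ positiveSets φ) (hS₂ : S₂ ∈ positiveSets φ) :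
    S₁ ∩ S₂ ∈ positiveSets φ := by
  obtain ⟨b, c, hb, hind, hcb⟩ := exists_linearCombination_eq_of_not_linearIndependent hA
  obtain ⟨j₁, hj₁, j₂, hj₂, hne⟩ := support_nontrivial_of_linearCombination_eq hb hcb
  let F : ι → Set I := fun j => if j = j₁ then S₁ else S₂
  have hF : ⋂ j ∈ c.support, F j = S₁ ∩ S₂ := by
    refine (Set.subset_inter ?_ ?_).antisymm (Set.subset_iInter₂ fun j _ => ?_)
    · exact (Set.biInter_subset_of_mem hj₁).trans_eq (if_pos rfl)
    · exact (Set.biInter_subset_of_mem hj₂).trans_eq (if_neg hne.symm)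
    · by_cases h : j = j₁ <;> simp [F, h]
  rw [← hF]
  refine hΦ.iInter_mem_positiveSets hind hcb fun j _ => ?_
  by_cases h : j = j₁ <;> simpa [F, h]

end Intertwines

end Arrangement

theorem filter_properties_general {ℓ : ℕ} {ι : Type} [Fintype ι] {A : Arrangement ℓ ι}
    (hA : ¬ LinearIndependent ℝ A.form) {I : Type*} {Φ : (I → A.Ch) → A.Ch}
    {φ : (I → ℤˣ) → ℤˣ} (hunit : φ (fun _ => 1) = 1) (hΦ : A.Intertwines Φ φ) :
    Set.univ ∈ positiveSets φ ∧
    (∀ S : Set I, S ∈ positiveSets φ ↔ Sᶜ ∉ positiveSets φ) ∧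
    (∀ S₁ S₂ : Set I, S₁ ∈ positiveSets φ → S₂ ∈ positiveSets φ →
      S₁ ∩ S₂ ∈ positiveSets φ) := by
  have : Nonempty ι := not_isEmpty_iff.mp fun _ => hA linearIndependent_empty_type
  exact ⟨univ_mem_positiveSets hunit, hΦ.mem_positiveSets_iff_compl_notMem,
    fun _ _ => hΦ.inter_mem_positiveSets hA⟩

/-- **Lemma.** Let `𝒜` be indecomposable with `|𝒜| ≥ 3`, `Φ` admissible with (`j`- and
`σ`-independent) associated map `φ : B^m → B`, and `K = {S ⊆ {1,…,m} : φ(S₊) = +}`. Then: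
(1) `{1,…,m} ∈ K`; (2) `S ∈ K ↔ Sᶜ ∉ K`; (3) `S₁, S₂ ∈ K → S₁ ∩ S₂ ∈ K`. -/
theorem filter_properties {ℓ : ℕ} {ι : Type} [Fintype ι] (A : Arrangement ℓ ι)
    (hA : A.Indecomposable) (hcard : 3 ≤ Fintype.card ι)
    (m : ℕ) (hm : 0 < m)
    (Φ : (Fin m → A.Ch) → A.Ch)
    (φ : (Fin m → ℤˣ) → ℤˣ)
    (hunit : φ (fun _ => 1) = 1)
    (hcomm : ∀ j σ 𝒞, A.eps j σ (Φ 𝒞) = φ (fun i => A.eps j σ (𝒞 i)))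
    (K : Set (Set (Fin m))) (hK : K = {S | φ (Splus m S) = 1}) :
    Set.univ ∈ K ∧
    (∀ S : Set (Fin m), S ∈ K ↔ Sᶜ ∉ K) ∧
    (∀ S₁ S₂ : Set (Fin m), S₁ ∈ K → S₂ ∈ K → S₁ ∩ S₂ ∈ K) := by
  have : Nontrivial ι := Fintype.one_lt_card_iff_nontrivial.mp (by omega)
  exact hK ▸ filter_properties_general
    (fun h => hA (Arrangement.decomposable_of_linearIndependent h)) hunit hcomm
end
end
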